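/- arXiv:2601.21486 — 2 statements merged into one kernel-verified Lean document; each statement's English description precedes it below -/
import Mathlib

section
/- Let J_1 be a Jordan curve in ℝ², and let J_2, …, J_m be pairwise disjoint Jordan curves (also disjoint from J_1) contained in int J_1. Then the set int J_1 \ ⋃_{i=2}^m closure(int J_i) is path-connected. -/
open Set

/-- A Jordan curve in the plane: the image of an injective continuous map from the
circle `S¹` into `ℝ²`. -/
def IsJordanCurve (J : Set (EuclideanSpace ℝ (Fin 2))) : Prop :=
  ∃ f : Metric.sphere (0 : EuclideanSpace ℝ (Fin 2)) 1 → EuclideanSpace ℝ (Fin 2),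
    Continuous f ∧ Function.Injective f ∧ Set.range f = J

/-- The interior of a Jordan curve: the union of the bounded connected components of the
complement of `J`. -/
def jordanInterior (J : Set (EuclideanSpace ℝ (Fin 2))) : Set (EuclideanSpace ℝ (Fin 2)) :=
  {x | x ∉ J ∧ Bornology.IsBounded (connectedComponentIn Jᶜ x)}

namespace JCT

lemma log_diff_const {A : Type*} [TopologicalSpace A] {S : Set A} (hS : IsPreconnected S)
    {l₁ l₂ : A → ℂ} (h₁ : ContinuousOn l₁ S) (h₂ : ContinuousOn l₂ S)
    (h : ∀ x ∈ S, Complex.exp (l₁ x) = Complex.exp (l₂ x)) {a b : A} (ha : a ∈ S) (hb : b ∈ S) :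
    l₁ a - l₂ a = l₁ b - l₂ b := by
  refine Complex.isCoveringMap_exp.constOn_of_comp hS (g := fun x => l₁ x - l₂ x)
    (h₁.sub h₂) ?_ ha hb
  intro x hx y hy
  apply Subtype.ext
  simp [Complex.exp_sub, h x hx, h y hy]

/-- continuous nonvanishing functions on a simply connected space have a logarithm -/
lemma exists_log {A : Type*} [TopologicalSpace A] [SimplyConnectedSpace A]
    [LocallyPathConnectedSpace A] [Inhabited A] (f : A → ℂ) (hf : Continuous f)
    (h0 : ∀ x, f x ≠ 0) : ∃ l : A → ℂ, Continuous l ∧ ∀ x, Complex.exp (l x) = f x := by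
  obtain ⟨F, ⟨-, hF⟩, -⟩ := Complex.isCoveringMapOn_exp.existsUnique_continuousMap_lifts
    (⟨f, hf⟩ : C(A, ℂ)) (a₀ := default) (e₀ := Complex.log (f default))
    (by simp [Complex.exp_log (h0 _)]) (fun a => by simpa using h0 a)
  exact ⟨F, F.continuous, fun x => congrFun hF x⟩

def HasLogOn (f : ℂ → ℂ) (X : Set ℂ) : Prop :=
  ∃ l : ℂ → ℂ, ContinuousOn l X ∧ ∀ x ∈ X, Complex.exp (l x) = f x

lemma HasLogOn.mono {f : ℂ → ℂ} {X Y : Set ℂ} (h : HasLogOn f X) (hY : Y ⊆ X) : HasLogOn f Y := by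
  obtain ⟨l, hl, h⟩ := h
  exact ⟨l, hl.mono hY, fun x hx => h x (hY hx)⟩

/-- winding number obstruction -/
lemma circle_log {p : ℂ} {R : ℝ} (hR : 0 < R) {n : ℤ}
    (h : HasLogOn (fun z => (z - p) ^ n) (Metric.sphere p R)) : n = 0 := by
  obtain ⟨l, hl, h⟩ := h
  have hmem : ∀ t : ℝ, p + R * Complex.exp (t * Complex.I) ∈ Metric.sphere p R := by
    intro t
    simp [Complex.norm_exp_ofReal_mul_I, abs_of_pos hR]
  have hc := log_diff_const (A := ℝ) (S := univ) isPreconnected_univ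
    (l₁ := fun t => l (p + R * Complex.exp (t * Complex.I)))
    (l₂ := fun t => n * (Real.log R + t * Complex.I))
    (hl.comp (by fun_prop) (fun t _ => hmem t)) (by fun_prop)
    (by
      intro t _
      rw [h _ (hmem t), Complex.exp_int_mul, Complex.exp_add, ← Complex.ofReal_exp,
        Real.exp_log hR]
      simp) (mem_univ 0) (mem_univ (2 * Real.pi))
  simp only [Complex.ofReal_mul, Complex.ofReal_ofNat, Complex.exp_two_pi_mul_I,
    Complex.ofReal_zero, zero_mul, Complex.exp_zero] at hc
  have : (n : ℂ) * (2 * Real.pi * Complex.I) = 0 := by linear_combination hc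
  simpa [Real.pi_ne_zero] using this

/-- homotopy: `(z - γ b)/(z - γ a)` has a logarithm off the path -/
lemma path_log {a b : ℂ} (γ : Path a b) : HasLogOn (fun z => (z - b) / (z - a)) (range γ)ᶜ := by
  let A := ((range γ)ᶜ : Set ℂ)
  have hne : ∀ (t : unitInterval) (z : A), (z : ℂ) - γ t ≠ 0 := by
    intro t z h
    exact z.2 ⟨t, (sub_eq_zero.1 h).symm⟩
  have hnea : ∀ (z : A), (z : ℂ) - a ≠ 0 := by
    intro z; simpa using hne 0 z
  let H : C(unitInterval × A, {z : ℂ // z ≠ 0}) :=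
    ⟨fun x => ⟨((x.2 : ℂ) - γ x.1) / (x.2 - a), div_ne_zero (hne _ _) (hnea _)⟩, by
      refine Continuous.subtype_mk ?_ _
      refine Continuous.div (by fun_prop) (by fun_prop) (fun x => hnea _)⟩
  have H0 : ∀ z : A, H (0, z) = (fun z : ℂ ↦ (⟨_, z.exp_ne_zero⟩ : {z : ℂ // z ≠ 0}))
      ((ContinuousMap.const A (0:ℂ)) z) := by
    intro z
    apply Subtype.ext
    simp [H, div_self (hnea z)]
  let L := Complex.isCoveringMap_exp.liftHomotopy H (ContinuousMap.const A (0:ℂ)) H0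
  have hL := Complex.isCoveringMap_exp.liftHomotopy_lifts H (ContinuousMap.const A (0:ℂ)) H0
  classical
  refine ⟨fun z => if hz : z ∈ A then L (1, ⟨z, hz⟩) else 0, ?_, ?_⟩
  · rw [continuousOn_iff_continuous_domRestrict]
    have : Continuous (fun z : A => L (1, z)) := by fun_prop
    convert this using 1
    ext z
    have := z.2
    simp
  · intro z hz
    have := congrArg Subtype.val (congrFun hL (1, ⟨z, hz⟩))
    simp only [dif_pos (show z ∈ A from hz)]
    refine Eq.trans this ?_
    simp [H]

lemma frontier_component {K : Set ℂ} (hK : IsClosed K) (p : ℂ) :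
    closure (connectedComponentIn Kᶜ p) ⊆ connectedComponentIn Kᶜ p ∪ K := by
  intro x hx
  by_contra hcon
  simp only [mem_union, not_or] at hcon
  have ho : IsOpen (connectedComponentIn Kᶜ x) := hK.isOpen_compl.connectedComponentIn
  obtain ⟨y, hy1, hy2⟩ := mem_closure_iff.1 hx _ ho (mem_connectedComponentIn hcon.2)
  have e1 := connectedComponentIn_eq hy1
  have e2 := connectedComponentIn_eq hy2
  exact hcon.1 (by rw [e2, ← e1]; exact mem_connectedComponentIn hcon.2)

/-- Borsuk -/
lemma borsuk {K : Set ℂ} (hK : IsCompact K) {p : ℂ} (hp : p ∉ K)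
    (hb : Bornology.IsBounded (connectedComponentIn Kᶜ p)) {n : ℤ} {h : ℂ → ℂ}
    (hh : ContinuousOn h (closure (connectedComponentIn Kᶜ p)))
    (hh0 : ∀ z ∈ closure (connectedComponentIn Kᶜ p), h z ≠ 0)
    (hl : HasLogOn (fun z => (z - p) ^ n * h z) K) : n = 0 := by
  set U := connectedComponentIn Kᶜ p with hU
  have hUo : IsOpen U := hK.isClosed.isOpen_compl.connectedComponentIn
  have hpU : p ∈ U := mem_connectedComponentIn hp
  have hUK : Disjoint U K := by
    rw [Set.disjoint_left]; intro x hx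
    exact connectedComponentIn_subset _ _ hx
  obtain ⟨g, hg, hge⟩ := hl
  obtain ⟨G, hG⟩ := ContinuousMap.exists_restrict_eq hK.isClosed
    (⟨K.domRestrict g, continuousOn_iff_continuous_domRestrict.1 hg⟩ : C(K, ℂ))
  have hGg : ∀ z ∈ K, G z = g z := fun z hz => congrArg (fun f => f ⟨z, hz⟩) hG
  classical
  let φ : ℂ → ℂ := U.piecewise (fun z => Complex.exp (G z) / h z) (fun z => (z - p) ^ n)
  have hφ0 : ∀ z, φ z ≠ 0 := by
    intro z
    by_cases hz : z ∈ U
    · simp only [φ, piecewise_eq_of_mem _ _ _ hz]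
      exact div_ne_zero (Complex.exp_ne_zero _) (hh0 z (subset_closure hz))
    · simp only [φ, piecewise_eq_of_notMem _ _ _ hz]
      refine zpow_ne_zero _ (sub_ne_zero.2 ?_)
      rintro rfl; exact hz hpU
  have hφc : Continuous φ := by
    refine continuous_piecewise ?_ ?_ ?_
    · intro z hz
      have hzc : z ∈ closure U := frontier_subset_closure hz
      have hzU : z ∉ U := by
        rw [hUo.frontier_eq] at hz; exact hz.2
      have hzK : z ∈ K := (frontier_component hK.isClosed p hzc).resolve_left hzU
      rw [hGg z hzK, hge z hzK, mul_div_assoc, div_self (hh0 z hzc), mul_one]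
    · exact ContinuousOn.div (by fun_prop) hh hh0
    · rw [hUo.isClosed_compl.closure_eq]
      refine ContinuousOn.zpow₀ (by fun_prop) _ ?_
      intro z hz
      left
      refine sub_ne_zero.2 ?_
      rintro rfl; exact hz hpU
  obtain ⟨l, hl, hle⟩ := exists_log φ hφc hφ0
  obtain ⟨R, hR0, hR⟩ := hb.subset_ball_lt 0 p
  refine circle_log (p := p) hR0 ⟨l, hl.continuousOn, fun z hz => ?_⟩
  rw [hle]
  refine piecewise_eq_of_notMem _ _ _ (fun hzU => ?_)
  have := hR hzU
  simp only [Metric.mem_ball, Metric.mem_sphere] at this hz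
  linarith

/-- two points in the same component -/
lemma same_comp_log {K : Set ℂ} (hK : IsClosed K) {p q : ℂ} (hp : p ∉ K)
    (hq : q ∈ connectedComponentIn Kᶜ p) : HasLogOn (fun z => (z - q) / (z - p)) K := by
  have hUo : IsOpen (connectedComponentIn Kᶜ p) := hK.isOpen_compl.connectedComponentIn
  have hUc : IsConnected (connectedComponentIn Kᶜ p) := isConnected_connectedComponentIn_iff.2 hp
  obtain ⟨γ, hγ⟩ := (hUo.isConnected_iff_isPathConnected.1 hUc).joinedIn p
    (mem_connectedComponentIn hp) q hq
  refine (path_log γ).mono ?_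
  intro z hz
  rintro ⟨t, rfl⟩
  exact connectedComponentIn_subset _ _ (hγ t) hz

lemma outside_connected {R : ℝ} (hR : 0 < R) : IsPreconnected {z : ℂ | R < ‖z‖} := by
  have : {z : ℂ | R < ‖z‖} = Complex.exp '' {w : ℂ | Real.log R < w.re} := by
    ext z
    constructor
    · intro hz
      have hz0 : z ≠ 0 := by rintro rfl; simp at hz; linarith
      refine ⟨Complex.log z, ?_, Complex.exp_log hz0⟩
      simp only [mem_ofPred_eq, Complex.log_re] at hz ⊢
      exact Real.log_lt_log hR hz
    · rintro ⟨w, hw, rfl⟩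
      simp only [mem_ofPred_eq, Complex.norm_exp] at hw ⊢
      exact (Real.log_lt_iff_lt_exp hR).1 hw
  rw [this]
  exact (convex_halfSpace_re_gt _).isPreconnected.image _ Complex.continuous_exp.continuousOn

/-- unbounded components coincide -/
lemma unbounded_eq {K : Set ℂ} (hK : IsCompact K) {p q : ℂ}
    (hpb : ¬ Bornology.IsBounded (connectedComponentIn Kᶜ p))
    (hqb : ¬ Bornology.IsBounded (connectedComponentIn Kᶜ q)) :
    connectedComponentIn Kᶜ p = connectedComponentIn Kᶜ q := by
  obtain ⟨R, hR0, hR⟩ := hK.isBounded.subset_closedBall_lt 0 0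
  have key : ∀ r, ¬ Bornology.IsBounded (connectedComponentIn Kᶜ r) →
      ∃ x ∈ connectedComponentIn Kᶜ r, R < ‖x‖ := by
    intro r hr
    by_contra! hcon
    exact hr ((Metric.isBounded_closedBall (x := (0:ℂ)) (r := R)).subset
      (fun x hx => by simpa using hcon x hx))
  obtain ⟨x, hx, hxR⟩ := key p hpb
  obtain ⟨y, hy, hyR⟩ := key q hqb
  have hsub : {z : ℂ | R < ‖z‖} ⊆ Kᶜ := by
    intro z hz hzK
    have := hR hzK
    simp only [mem_ofPred_eq, Metric.mem_closedBall, dist_zero_right] at this hz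
    linarith
  have := (outside_connected hR0).subset_connectedComponentIn hxR hsub hyR
  rw [connectedComponentIn_eq hx, connectedComponentIn_eq hy]
  exact connectedComponentIn_eq this

lemma preconnected_compl {K : Set ℂ} (hK : IsCompact K)
    (h : ∀ p ∉ K, ¬ Bornology.IsBounded (connectedComponentIn Kᶜ p)) : IsPreconnected Kᶜ := by
  refine isPreconnected_of_forall_pair fun x hx y hy =>
    ⟨connectedComponentIn Kᶜ x, connectedComponentIn_subset _ _, mem_connectedComponentIn hx, ?_,
      isPreconnected_connectedComponentIn⟩
  rw [unbounded_eq hK (h x hx) (h y hy)]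
  exact mem_connectedComponentIn hy

lemma descend {g : ℝ → ℂ} (hg : Continuous g) {a b : ℝ} {L : ℝ → ℂ}
    (hL : ContinuousOn L (Icc a b))
    (h : ∀ s ∈ Icc a b, ∀ t ∈ Icc a b, g s = g t → L s = L t) :
    ∃ l : ℂ → ℂ, ContinuousOn l (g '' Icc a b) ∧ ∀ t ∈ Icc a b, l (g t) = L t := by
  have key : ∀ t ∈ Icc a b, L (Function.invFunOn g (Icc a b) (g t)) = L t := by
    intro t ht
    have hm : g t ∈ g '' Icc a b := mem_image_of_mem _ ht
    exact h _ (Function.invFunOn_mem hm) _ ht (Function.invFunOn_eq hm)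
  refine ⟨fun x => L (Function.invFunOn g (Icc a b) x), ?_, key⟩
  rw [continuousOn_iff_isClosed]
  intro C hC
  refine ⟨g '' (Icc a b ∩ L ⁻¹' C), ?_, ?_⟩
  · have h1 : IsClosed (Icc a b ∩ L ⁻¹' C) := hL.preimage_isClosed_of_isClosed isClosed_Icc hC
    exact ((isCompact_Icc.of_isClosed_subset h1 inter_subset_left).image hg).isClosed
  · ext x
    constructor
    · rintro ⟨h1, t, ht, rfl⟩
      refine ⟨⟨t, ⟨ht, ?_⟩, rfl⟩, mem_image_of_mem _ ht⟩
      have := key t ht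
      simp only [mem_preimage] at h1 ⊢
      rwa [← this]
    · rintro ⟨⟨t, ⟨ht, h1⟩, rfl⟩, h2⟩
      refine ⟨?_, h2⟩
      simp only [mem_preimage] at h1 ⊢
      rwa [key t ht]

lemma arc_log {g : ℝ → ℂ} (hg : Continuous g) {a b : ℝ} (hab : a ≤ b) (hi : InjOn g (Icc a b))
    {p : ℂ} (hp : p ∉ g '' Icc a b) : HasLogOn (fun z => z - p) (g '' Icc a b) := by
  obtain ⟨L, hL, hLe⟩ := exists_log (fun t : ℝ => g (max a (min b t)) - p) (by fun_prop) (by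
    intro t h
    exact hp ⟨_, ⟨le_max_left _ _, max_le hab (min_le_left _ _)⟩, sub_eq_zero.1 h⟩)
  obtain ⟨l, hl, hle⟩ := descend hg (a := a) (b := b) hL.continuousOn
    (fun s hs t ht h => by rw [hi hs ht h])
  refine ⟨l, hl, ?_⟩
  rintro _ ⟨t, ht, rfl⟩
  rw [hle t ht, hLe, min_eq_right ht.2, max_eq_right ht.1]

lemma arc_unbounded {g : ℝ → ℂ} (hg : Continuous g) {a b : ℝ} (hab : a ≤ b)
    (hi : InjOn g (Icc a b)) : 
    ∀ p ∉ g '' Icc a b, ¬ Bornology.IsBounded (connectedComponentIn (g '' Icc a b)ᶜ p) := by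
  intro p hp hb
  have := borsuk (n := 1) (h := fun _ => 1) (isCompact_Icc.image hg) hp hb
    continuousOn_const (fun _ _ => one_ne_zero) (by simpa using arc_log hg hab hi hp)
  exact one_ne_zero this

def IsJ (J : Set ℂ) : Prop :=
  ∃ g : ℝ → ℂ, Continuous g ∧ range g = J ∧
    ∀ s t, g s = g t ↔ ∃ m : ℤ, s = t + m * (2 * Real.pi)

def cInt (J : Set ℂ) : Set ℂ := {x | x ∉ J ∧ Bornology.IsBounded (connectedComponentIn Jᶜ x)}

lemma inj_of_lt {g : ℝ → ℂ} (hper : ∀ s t, g s = g t ↔ ∃ m : ℤ, s = t + m * (2 * Real.pi))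
    {s t : ℝ} (h : g s = g t) (h1 : s - t < 2 * Real.pi) (h2 : t - s < 2 * Real.pi) : s = t := by
  obtain ⟨m, hm⟩ := (hper s t).1 h
  have hpi := Real.pi_pos
  have h3 : (m : ℝ) < 1 := by
    by_contra! hc
    nlinarith
  have h4 : (-1 : ℝ) < m := by
    by_contra! hc
    nlinarith
  have h5 : m < 1 := by exact_mod_cast h3
  have h6 : -1 < m := by exact_mod_cast h4
  have : m = 0 := by omega
  simpa [this] using hm

lemma range_eq_image {g : ℝ → ℂ} (hper : ∀ s t, g s = g t ↔ ∃ m : ℤ, s = t + m * (2 * Real.pi))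
    (a : ℝ) : range g = g '' Ico a (a + 2 * Real.pi) := by
  apply Subset.antisymm
  · rintro _ ⟨t, rfl⟩
    obtain ⟨m, hm, -⟩ := existsUnique_add_zsmul_mem_Ico Real.two_pi_pos t a
    exact ⟨_, hm, (hper _ _).2 ⟨m, by simp⟩⟩
  · exact image_subset_range _ _

lemma range_eq_image' {g : ℝ → ℂ} (hper : ∀ s t, g s = g t ↔ ∃ m : ℤ, s = t + m * (2 * Real.pi))
    (a : ℝ) : range g = g '' Icc a (a + 2 * Real.pi) :=
  Subset.antisymm (by rw [range_eq_image hper a]; exact image_mono Ico_subset_Icc_self)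
    (image_subset_range _ _)

lemma IsJ.isCompact {J : Set ℂ} (hJ : IsJ J) : IsCompact J := by
  obtain ⟨g, hg, rfl, hper⟩ := hJ
  rw [range_eq_image' hper 0]
  exact isCompact_Icc.image hg

lemma IsJ.nonempty {J : Set ℂ} (hJ : IsJ J) : J.Nonempty := by
  obtain ⟨g, hg, rfl, hper⟩ := hJ
  exact range_nonempty g

/-- existence of degrees -/
lemma degree {g : ℝ → ℂ} (hg : Continuous g)
    (hper : ∀ s t, g s = g t ↔ ∃ m : ℤ, s = t + m * (2 * Real.pi)) {p : ℂ} (hp : p ∉ range g) :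
    ∃ (L : ℝ → ℂ) (n : ℤ), Continuous L ∧ (∀ t, Complex.exp (L t) = g t - p) ∧
      L (2 * Real.pi) - L 0 = n * (2 * Real.pi * Complex.I) := by
  obtain ⟨L, hL, hLe⟩ := exists_log (fun t : ℝ => g t - p) (by fun_prop) (by
    intro t h
    exact hp ⟨t, sub_eq_zero.1 h⟩)
  have h1 : g (2 * Real.pi) = g 0 := (hper _ _).2 ⟨1, by simp⟩
  have : Complex.exp (L (2 * Real.pi)) = Complex.exp (L 0) := by rw [hLe, hLe, h1]
  obtain ⟨n, hn⟩ := Complex.exp_eq_exp_iff_exists_int.1 this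
  exact ⟨L, n, hL, hLe, by rw [hn]; ring⟩

lemma curve_log {g : ℝ → ℂ} (hg : Continuous g)
    (hper : ∀ s t, g s = g t ↔ ∃ m : ℤ, s = t + m * (2 * Real.pi)) {f : ℂ → ℂ}
    {L : ℝ → ℂ} (hL : Continuous L) (hLe : ∀ t, Complex.exp (L t) = f (g t))
    (hd : L (2 * Real.pi) = L 0) : HasLogOn f (range g) := by
  obtain ⟨l, hl, hle⟩ := descend hg (a := 0) (b := 2 * Real.pi) hL.continuousOn (by
    intro s hs t ht hst
    by_cases h1 : s - t < 2 * Real.pi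
    · by_cases h2 : t - s < 2 * Real.pi
      · rw [inj_of_lt hper hst h1 h2]
      · have e1 : s = 0 := by linarith [hs.1, ht.2]
        have e2 : t = 2 * Real.pi := by linarith [hs.1, ht.2]
        rw [e1, e2, hd]
    · have e1 : t = 0 := by linarith [hs.2, ht.1]
      have e2 : s = 2 * Real.pi := by linarith [hs.2, ht.1]
      rw [e1, e2, hd])
  have hr := range_eq_image' hper 0
  rw [zero_add] at hr
  rw [hr]
  refine ⟨l, hl, ?_⟩
  rintro _ ⟨t, ht, rfl⟩
  rw [hle t ht, hLe]

lemma int_unique {J : Set ℂ} (hJ : IsJ J) {p q : ℂ} (hp : p ∈ cInt J) (hq : q ∈ cInt J) :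
    q ∈ connectedComponentIn Jᶜ p := by
  have hc := hJ.isCompact
  obtain ⟨g, hg, rfl, hper⟩ := hJ
  by_contra hcon
  obtain ⟨Lp, n, hLp, hLpe, hn⟩ := degree hg hper hp.1
  obtain ⟨Lq, k, hLq, hLqe, hk⟩ := degree hg hper hq.1
  have hqcl : ∀ z ∈ closure (connectedComponentIn (range g)ᶜ p), z - q ≠ 0 := by
    intro z hz h
    rw [sub_eq_zero.1 h] at hz
    exact (frontier_component hc.isClosed p hz).elim hcon hq.1
  have hk0 : k = 0 := by
    refine borsuk hc hp.1 hp.2 (h := fun z => (z - q) ^ (-n))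
      (ContinuousOn.zpow₀ (by fun_prop) _ (fun z hz => Or.inl (hqcl z hz)))
      (fun z hz => zpow_ne_zero _ (hqcl z hz)) ?_
    refine curve_log hg hper (L := fun t => k * Lp t + (-n : ℤ) * Lq t) (by fun_prop) ?_ ?_
    · intro t
      rw [Complex.exp_add, Complex.exp_int_mul, Complex.exp_int_mul, hLpe, hLqe]
    · push_cast
      linear_combination k * hn - n * hk
  have := borsuk (n := 1) (h := fun _ => 1) hc hq.1 hq.2
    continuousOn_const (fun _ _ => one_ne_zero)
    (curve_log hg hper (L := Lq) hLq (by intro t; simp [hLqe]) (by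
      rw [hk0] at hk
      simpa [sub_eq_zero] using hk))
  exact one_ne_zero this

lemma cInt_eq {J : Set ℂ} (hJ : IsJ J) {p : ℂ} (hp : p ∈ cInt J) :
    cInt J = connectedComponentIn Jᶜ p := by
  apply Subset.antisymm
  · intro q hq
    exact int_unique hJ hp hq
  · intro q hq
    refine ⟨connectedComponentIn_subset _ _ hq, ?_⟩
    rw [← connectedComponentIn_eq hq]
    exact hp.2

lemma seg_log {g : ℝ → ℂ} (hg : Continuous g) {s t : ℝ} (hst : s ≤ t) :
    HasLogOn (fun z => (z - g t) / (z - g s)) (g '' Icc s t)ᶜ := by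
  let γ : Path (g s) (g t) :=
    { toFun := fun u => g (s + u * (t - s))
      continuous_toFun := by fun_prop
      source' := by simp
      target' := by simp }
  refine (path_log γ).mono ?_
  rw [compl_subset_compl]
  rintro _ ⟨u, rfl⟩
  refine ⟨s + u * (t - s), ⟨?_, ?_⟩, rfl⟩
  · nlinarith [u.2.1, u.2.2]
  · nlinarith [u.2.1, u.2.2]

lemma no_log_two_points {a b : ℂ} (hab : a ≠ b) :
    ¬ HasLogOn (fun z => (z - b) / (z - a)) {a, b}ᶜ := by
  intro hl
  set R := ‖a - b‖ / 2 with hR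
  have hpos : 0 < ‖a - b‖ := norm_pos_iff.2 (sub_ne_zero.2 hab)
  have hb : b ∉ Metric.sphere b R := by
    simp only [Metric.mem_sphere, dist_self]
    linarith
  have hsub : connectedComponentIn (Metric.sphere b R)ᶜ b ⊆ Metric.ball b R := by
    refine IsPreconnected.subset_left_of_subset_union Metric.isOpen_ball
      (Metric.isClosed_closedBall (x := b) (ε := R)).isOpen_compl ?_ ?_
      ⟨b, mem_connectedComponentIn hb, Metric.mem_ball_self (by linarith)⟩
      isPreconnected_connectedComponentIn
    · rw [Set.disjoint_left]
      intro x hx hx2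
      exact hx2 (Metric.ball_subset_closedBall hx)
    · intro x hx
      have h1 : x ∉ Metric.sphere b R := connectedComponentIn_subset _ _ hx
      by_cases h : x ∈ Metric.closedBall b R
      · left
        simp only [Metric.mem_sphere, Metric.mem_closedBall, Metric.mem_ball] at *
        exact lt_of_le_of_ne h h1
      · right; exact h
  have hcl : ∀ z ∈ closure (connectedComponentIn (Metric.sphere b R)ᶜ b), z - a ≠ 0 := by
    intro z hz h
    have h1 := closure_mono hsub hz
    have h2 := Metric.closure_ball_subset_closedBall h1
    rw [sub_eq_zero.1 h, Metric.mem_closedBall, dist_eq_norm] at h2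
    linarith
  have := borsuk (n := 1) (h := fun z => (z - a)⁻¹) (isCompact_sphere b R) hb
    (Metric.isBounded_ball.subset hsub) (ContinuousOn.inv₀ (by fun_prop) hcl)
    (fun z hz => inv_ne_zero (hcl z hz)) (by
      simp only [zpow_one]
      refine hl.mono ?_
      intro z hz hz2
      rw [Metric.mem_sphere, dist_eq_norm] at hz
      rcases hz2 with rfl | h
      · linarith
      · rw [mem_singleton_iff.1 h, sub_self, norm_zero] at hz
        linarith)
  exact one_ne_zero this

lemma log_glue_open {f : ℂ → ℂ} {U V : Set ℂ} (hU : IsOpen U) (hV : IsOpen V)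
    (hUV : IsPreconnected (U ∩ V)) (h1 : HasLogOn f U) (h2 : HasLogOn f V) :
    HasLogOn f (U ∪ V) := by
  classical
  obtain ⟨l, hl, hle⟩ := h1
  obtain ⟨k, hk, hke⟩ := h2
  obtain ⟨c, hc1, hc⟩ : ∃ c : ℂ, Complex.exp c = 1 ∧ ∀ z ∈ U ∩ V, l z = k z + c := by
    rcases (U ∩ V).eq_empty_or_nonempty with h | ⟨x, hx⟩
    · exact ⟨0, by simp, by simp [h]⟩
    · have hfx : f x ≠ 0 := by rw [← hle x hx.1]; exact Complex.exp_ne_zero _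
      refine ⟨l x - k x, ?_, ?_⟩
      · rw [Complex.exp_sub, hle x hx.1, hke x hx.2, div_self hfx]
      · intro z hz
        have := log_diff_const hUV (hl.mono inter_subset_left) (hk.mono inter_subset_right)
          (fun y hy => by rw [hle y hy.1, hke y hy.2]) hz hx
        linear_combination this
  have e2 : ∀ z ∈ V, (if z ∈ U then l z else k z + c) = k z + c := by
    intro z hz
    split_ifs with h
    · exact hc z ⟨h, hz⟩
    · rfl
  refine ⟨fun z => if z ∈ U then l z else k z + c, ?_, ?_⟩
  · refine ContinuousOn.union_of_isOpen ?_ ?_ hU hV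
    · exact hl.congr (fun z hz => if_pos hz)
    · exact (hk.add continuousOn_const).congr e2
  · rintro z hz
    by_cases h : z ∈ U
    · simp only [if_pos h]; exact hle z h
    · simp only [if_neg h]
      rw [Complex.exp_add, hc1, mul_one]
      exact hke z (hz.resolve_left h)

lemma int_nonempty {J : Set ℂ} (hJ : IsJ J) : (cInt J).Nonempty := by
  by_contra hne
  have hc := hJ.isCompact
  have hpre : IsPreconnected Jᶜ := preconnected_compl hc
    (fun p hp hb => hne ⟨p, hp, hb⟩)
  obtain ⟨g, hg, rfl, hper⟩ := hJ
  have hpi := Real.pi_pos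
  have h0 : g (2 * Real.pi) = g 0 := (hper _ _).2 ⟨1, by simp⟩
  have hab : g 0 ≠ g Real.pi := by
    intro h
    have := inj_of_lt hper h (by linarith) (by linarith)
    linarith
  have hA := seg_log hg (s := 0) (t := Real.pi) hpi.le
  have hB := seg_log hg (s := Real.pi) (t := 2 * Real.pi) (by linarith)
  rw [h0] at hB
  have hB' : HasLogOn (fun z => (z - g Real.pi) / (z - g 0)) (g '' Icc Real.pi (2 * Real.pi))ᶜ := by
    obtain ⟨l, hl, hle⟩ := hB
    refine ⟨fun z => - l z, hl.neg, fun z hz => ?_⟩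
    rw [Complex.exp_neg, hle z hz, inv_div]
  refine no_log_two_points hab ((log_glue_open (isCompact_Icc.image hg).isClosed.isOpen_compl
    (isCompact_Icc.image hg).isClosed.isOpen_compl ?_ hA hB').mono ?_)
  · rw [← compl_union, ← image_union, Icc_union_Icc_eq_Icc hpi.le (by linarith)]
    have hr := range_eq_image' hper 0
    rw [zero_add] at hr
    rwa [← hr]
  · rw [← compl_inter, compl_subset_compl]
    rintro _ ⟨⟨s, hs, rfl⟩, ⟨t, ht, hst⟩⟩
    by_cases h : t - s < 2 * Real.pi
    · have e := inj_of_lt hper hst h (by linarith [hs.1, hs.2, ht.1, ht.2])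
      have : s = Real.pi := le_antisymm hs.2 (by rw [← e]; exact ht.1)
      rw [this]; right; rfl
    · have : s = 0 := by linarith [hs.1, ht.2]
      rw [this]; left; rfl

lemma not_bounded_of_compl {B : Set ℂ} (hB : Bornology.IsBounded B) :
    ¬ Bornology.IsBounded Bᶜ := by
  intro h
  have := hB.union h
  rw [union_compl_self] at this
  exact NormedSpace.unbounded_univ ℂ ℂ this

lemma subset_closure_int {J : Set ℂ} (hJ : IsJ J) : J ⊆ closure (cInt J) := by
  have hc := hJ.isCompact
  obtain ⟨p, hp⟩ := int_nonempty hJ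
  have heq := cInt_eq hJ hp
  have hUo : IsOpen (cInt J) := by
    rw [heq]; exact hc.isClosed.isOpen_compl.connectedComponentIn
  have hfr := frontier_component hc.isClosed p
  rw [← heq] at hfr
  have hbd : Bornology.IsBounded (cInt J) := by rw [heq]; exact hp.2
  intro x hx
  by_contra hcon
  obtain ⟨g, hg, rfl, hper⟩ := hJ
  obtain ⟨t₀, rfl⟩ := hx
  have hnh : g ⁻¹' (closure (cInt (range g)))ᶜ ∈ nhds t₀ :=
    hg.continuousAt.preimage_mem_nhds (isClosed_closure.isOpen_compl.mem_nhds hcon)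
  obtain ⟨δ', hδ', hδs'⟩ := Metric.mem_nhds_iff.1 hnh
  have hpi := Real.pi_pos
  obtain ⟨δ, hδ, hδpi, hδs⟩ : ∃ δ > 0, δ < Real.pi ∧ ∀ t, |t - t₀| < δ →
      g t ∉ closure (cInt (range g)) := by
    refine ⟨min δ' (Real.pi / 2), by positivity, ?_, ?_⟩
    · exact lt_of_le_of_lt (min_le_right _ _) (by linarith)
    · intro t ht
      exact hδs' (by
        rw [Metric.mem_ball, Real.dist_eq]; exact lt_of_lt_of_le ht (min_le_left _ _))
  set B := g '' Icc (t₀ + δ) (t₀ + 2 * Real.pi - δ) with hB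
  have hBc : IsCompact B := isCompact_Icc.image hg
  have hBinj : InjOn g (Icc (t₀ + δ) (t₀ + 2 * Real.pi - δ)) := by
    intro s hs t ht h
    exact inj_of_lt hper h (by linarith [hs.2, ht.1]) (by linarith [hs.1, ht.2])
  have hpre : IsPreconnected Bᶜ :=
    preconnected_compl hBc (arc_unbounded hg (by linarith) hBinj)
  have hcov : Bᶜ ⊆ cInt (range g) ∪ (closure (cInt (range g)))ᶜ := by
    intro y hy
    by_cases hyc : y ∈ closure (cInt (range g))
    · left
      refine (hfr hyc).resolve_right ?_
      intro hyJ
      rw [range_eq_image hper (t₀ - δ)] at hyJ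
      obtain ⟨s, hs, rfl⟩ := hyJ
      by_cases h1 : s < t₀ + δ
      · by_cases h2 : s = t₀ - δ
        · refine hy ⟨t₀ + 2 * Real.pi - δ, ⟨by linarith, le_refl _⟩, ?_⟩
          exact (hper _ _).2 ⟨1, by rw [h2]; push_cast; ring⟩
        · have : t₀ - δ < s := lt_of_le_of_ne hs.1 (Ne.symm h2)
          exact hδs s (by rw [abs_lt]; constructor <;> linarith) hyc
      · exact hy ⟨s, ⟨by linarith, by linarith [hs.2]⟩, rfl⟩
    · right; exact hyc
  have hsub := hpre.subset_left_of_subset_union hUo isClosed_closure.isOpen_compl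
    (Set.disjoint_left.2 (fun z hz hz2 => hz2 (subset_closure hz))) hcov
    ⟨p, fun h => hp.1 (image_subset_range _ _ h), hp⟩
  exact not_bounded_of_compl hBc.isBounded (hbd.subset hsub)

lemma closure_int {J : Set ℂ} (hJ : IsJ J) : closure (cInt J) = cInt J ∪ J := by
  obtain ⟨p, hp⟩ := int_nonempty hJ
  apply Subset.antisymm
  · have hfr := frontier_component hJ.isCompact.isClosed p
    rwa [← cInt_eq hJ hp] at hfr
  · exact union_subset subset_closure (subset_closure_int hJ)

lemma re_lt {J : Set ℂ} {y : ℂ} (hy : y ∈ cInt J) : ∃ z ∈ J, y.re < z.re := by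
  by_contra! hcon
  have hray : (fun s : ℝ => y + s) '' Ici 0 ⊆ connectedComponentIn Jᶜ y := by
    refine IsPreconnected.subset_connectedComponentIn ?_ ⟨0, by simp, by simp⟩ ?_
    · exact isPreconnected_Ici.image _ (by fun_prop)
    · rintro _ ⟨s, hs, rfl⟩ hmem
      rcases eq_or_lt_of_le (show (0:ℝ) ≤ s from hs) with h | h
      · rw [← h] at hmem
        exact hy.1 (by simpa using hmem)
      · have := hcon _ hmem
        simp at this
        linarith
  obtain ⟨R, hR0, hR⟩ := (hy.2.subset hray).subset_ball_lt 0 y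
  have := hR ⟨R, hR0.le, rfl⟩
  simp [abs_of_pos hR0] at this

lemma HasLogOn.union {f : ℂ → ℂ} {X Y : Set ℂ} (hX : IsClosed X) (hY : IsClosed Y)
    (hd : Disjoint X Y) (h1 : HasLogOn f X) (h2 : HasLogOn f Y) : HasLogOn f (X ∪ Y) := by
  classical
  obtain ⟨l, hl, hle⟩ := h1
  obtain ⟨k, hk, hke⟩ := h2
  have e1 : EqOn (X.piecewise l k) l X := piecewise_eqOn _ _ _
  have e2 : EqOn (X.piecewise l k) k Y := fun z hz =>
    piecewise_eq_of_notMem _ _ _ (Set.disjoint_right.1 hd hz)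
  refine ⟨X.piecewise l k, (hl.congr e1).union_of_isClosed (hk.congr e2) hX hY, ?_⟩
  rintro z (hz | hz)
  · rw [e1 hz]; exact hle z hz
  · rw [e2 hz]; exact hke z hz

lemma HasLogOn.biUnion {ι : Type*} {f : ℂ → ℂ} {K : ι → Set ℂ} (s : Finset ι)
    (hK : ∀ i, IsClosed (K i)) (hd : Pairwise (Function.onFun Disjoint K))
    (h : ∀ i, HasLogOn f (K i)) : HasLogOn f (⋃ i ∈ s, K i) := by
  classical
  induction s using Finset.induction_on with
  | empty => exact ⟨fun _ => 0, by simp, by simp⟩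
  | insert i s hi ih =>
    rw [Finset.set_biUnion_insert]
    refine HasLogOn.union (hK i) ?_ ?_ (h i) ih
    · exact s.finite_toSet.isClosed_biUnion (fun j _ => hK j)
    · rw [Set.disjoint_iUnion₂_right]
      intro j hj
      exact hd (fun h => hi (h ▸ hj))

theorem main {J₁ : Set ℂ} (hJ₁ : IsJ J₁) {m : ℕ} {K : Fin m → Set ℂ}
    (hK : ∀ i, IsJ (K i)) (hdisj : Pairwise (Function.onFun Disjoint K))
    (hdisjJ₁ : ∀ i, Disjoint (K i) J₁) (hsub : ∀ i, K i ⊆ cInt J₁) :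
    IsPathConnected (cInt J₁ \ ⋃ i, closure (cInt (K i))) := by
  set S := cInt J₁ \ ⋃ i, closure (cInt (K i)) with hS
  have hDclosed : IsClosed (⋃ i, closure (cInt (K i))) :=
    isClosed_iUnion_of_finite (fun i => isClosed_closure)
  -- nonempty
  have hne : S.Nonempty := by
    obtain ⟨x, hx, hmax⟩ := hJ₁.isCompact.exists_isMaxOn hJ₁.nonempty
      Complex.continuous_re.continuousOn
    have hxD : x ∈ (⋃ i, closure (cInt (K i)))ᶜ := by
      intro hmem
      obtain ⟨i, hi⟩ := mem_iUnion.1 hmem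
      rw [closure_int (hK i)] at hi
      rcases hi with hi | hi
      · obtain ⟨z, hz, hz2⟩ := re_lt hi
        obtain ⟨w, hw, hw2⟩ := re_lt (hsub i hz)
        have := hmax hw
        simp only [mem_ofPred_eq] at this
        linarith
      · exact Set.disjoint_left.1 (hdisjJ₁ i) hi hx
    obtain ⟨y, hy, hy2⟩ := mem_closure_iff.1 (subset_closure_int hJ₁ hx) _
      hDclosed.isOpen_compl hxD
    exact ⟨y, hy2, hy⟩
  obtain ⟨p, hp⟩ := hne
  set X := J₁ ∪ ⋃ i ∈ (Finset.univ : Finset (Fin m)), K i with hX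
  have hKc : IsCompact (⋃ i ∈ (Finset.univ : Finset (Fin m)), K i) :=
    Finset.univ.isCompact_biUnion (fun i _ => (hK i).isCompact)
  have hXc : IsCompact X := hJ₁.isCompact.union hKc
  have hJX : J₁ ⊆ X := subset_union_left
  have hKX : ∀ i, K i ⊆ X := fun i z hz => Or.inr (by simpa using ⟨i, hz⟩)
  have hSK : ∀ q ∈ S, ∀ i, q ∉ K i ∧ ¬ Bornology.IsBounded (connectedComponentIn (K i)ᶜ q) := by
    intro q hq i
    have h1 : q ∉ closure (cInt (K i)) := fun h => hq.2 (mem_iUnion.2 ⟨i, h⟩)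
    rw [closure_int (hK i)] at h1
    refine ⟨fun h => h1 (Or.inr h), fun h => h1 (Or.inl ⟨fun h' => h1 (Or.inr h'), h⟩)⟩
  have hSX : ∀ q ∈ S, q ∉ X := by
    rintro q hq (h | h)
    · exact hq.1.1 h
    · obtain ⟨i, hi⟩ : ∃ i, q ∈ K i := by simpa using h
      exact (hSK q hq i).1 hi
  have hcompJ : connectedComponentIn Xᶜ p ⊆ connectedComponentIn J₁ᶜ p :=
    connectedComponentIn_mono _ (compl_subset_compl.2 hJX)
  have hSeq : S = connectedComponentIn Xᶜ p := by
    apply Subset.antisymm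
    · intro q hq
      by_contra hcon
      have hqcl : ∀ z ∈ closure (connectedComponentIn Xᶜ p), z - q ≠ 0 := by
        intro z hz h
        rw [sub_eq_zero.1 h] at hz
        exact (frontier_component hXc.isClosed p hz).elim hcon (hSX q hq)
      have hlogJ : HasLogOn (fun z => (z - p) / (z - q)) J₁ :=
        same_comp_log hJ₁.isCompact.isClosed hq.1.1 (int_unique hJ₁ hq.1 hp.1)
      have hlogK : ∀ i, HasLogOn (fun z => (z - p) / (z - q)) (K i) := by
        intro i
        refine same_comp_log (hK i).isCompact.isClosed (hSK q hq i).1 ?_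
        rw [unbounded_eq (hK i).isCompact (hSK q hq i).2 (hSK p hp i).2]
        exact mem_connectedComponentIn (hSK p hp i).1
      have := borsuk (n := 1) (h := fun z => (z - q)⁻¹) hXc (hSX p hp)
        (hp.1.2.subset hcompJ) (ContinuousOn.inv₀ (by fun_prop) hqcl)
        (fun z hz => inv_ne_zero (hqcl z hz)) (by
          simp only [zpow_one]
          refine HasLogOn.union hJ₁.isCompact.isClosed hKc.isClosed ?_ hlogJ
            (HasLogOn.biUnion _ (fun i => (hK i).isCompact.isClosed) hdisj hlogK)
          rw [Set.disjoint_iUnion₂_right]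
          intro i _
          exact (hdisjJ₁ i).symm)
      exact one_ne_zero this
    · intro y hy
      have hyX : y ∉ X := connectedComponentIn_subset _ _ hy
      refine ⟨⟨fun h => hyX (hJX h), ?_⟩, ?_⟩
      · rw [← connectedComponentIn_eq (hcompJ hy)]; exact hp.1.2
      · intro hmem
        obtain ⟨i, hi⟩ := mem_iUnion.1 hmem
        rw [closure_int (hK i)] at hi
        rcases hi with hi | hi
        · have h1 : y ∈ connectedComponentIn (K i)ᶜ p :=
            connectedComponentIn_mono _ (compl_subset_compl.2 (hKX i)) hy
          refine (hSK p hp i).2 ?_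
          rw [connectedComponentIn_eq h1]
          exact hi.2
        · exact hyX (hKX i hi)
  rw [hSeq]
  exact (hXc.isClosed.isOpen_compl.connectedComponentIn).isConnected_iff_isPathConnected.1
    (isConnected_connectedComponentIn_iff.2 (hSX p hp))

end JCT

namespace JCT

noncomputable def e : EuclideanSpace ℝ (Fin 2) ≃ₗᵢ[ℝ] ℂ := Complex.orthonormalBasisOneI.repr.symm

lemma isJ_image {J : Set (EuclideanSpace ℝ (Fin 2))} (hJ : IsJordanCurve J) : IsJ (e '' J) := by
  obtain ⟨f, hf, hinj, rfl⟩ := hJ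
  have hmem : ∀ t : ℝ, e.symm (Circle.exp t : ℂ) ∈
      Metric.sphere (0 : EuclideanSpace ℝ (Fin 2)) 1 := by
    intro t; simp
  refine ⟨fun t => e (f ⟨e.symm (Circle.exp t : ℂ), hmem t⟩), ?_, ?_, ?_⟩
  · refine e.continuous.comp (hf.comp (Continuous.subtype_mk ?_ _))
    exact e.symm.continuous.comp (by fun_prop)
  · ext z
    constructor
    · rintro ⟨t, rfl⟩
      exact ⟨_, mem_range_self _, rfl⟩
    · rintro ⟨_, ⟨x, rfl⟩, rfl⟩
      have hx : ‖e (x : EuclideanSpace ℝ (Fin 2))‖ = 1 := by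
        rw [e.norm_map]; simp
      let c : Circle := ⟨e x, mem_sphere_zero_iff_norm.2 hx⟩
      refine ⟨Complex.arg c, ?_⟩
      have : e.symm (Circle.exp (Complex.arg c) : ℂ) = x := by
        rw [Circle.exp_arg]; simp [c]
      simp only [this]
  · intro s t
    rw [← Circle.exp_eq_exp]
    simp only [e.injective.eq_iff, hinj.eq_iff, Subtype.mk.injEq, e.symm.injective.eq_iff]
    exact Subtype.ext_iff.symm

lemma image_jordanInterior (J : Set (EuclideanSpace ℝ (Fin 2))) :
    e '' jordanInterior J = cInt (e '' J) := by
  have hb : ∀ s : Set (EuclideanSpace ℝ (Fin 2)),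
      Bornology.IsBounded (e '' s) ↔ Bornology.IsBounded s := by
    intro s
    constructor
    · intro h
      have := e.symm.lipschitz.isBounded_image h
      rwa [← image_comp, show (e.symm ∘ e) = id from funext e.symm_apply_apply, image_id] at this
    · exact fun h => e.lipschitz.isBounded_image h
  have key : ∀ x ∉ J, connectedComponentIn (e '' J)ᶜ (e x) = e '' connectedComponentIn Jᶜ x := by
    intro x hx
    rw [← image_compl_eq e.bijective]
    exact (e.toHomeomorph.image_connectedComponentIn (s := Jᶜ) hx).symm
  ext z
  obtain ⟨x, rfl⟩ := e.surjective z
  rw [e.injective.mem_set_image]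
  constructor
  · rintro ⟨h1, h2⟩
    refine ⟨by rwa [e.injective.mem_set_image], ?_⟩
    rw [key x h1, hb]; exact h2
  · rintro ⟨h1, h2⟩
    rw [e.injective.mem_set_image] at h1
    rw [key x h1, hb] at h2
    exact ⟨h1, h2⟩

end JCT

/-- Let `J₁` be a Jordan curve in `ℝ²` and let `K 0, …, K (m-1)` be pairwise disjoint Jordan
curves, disjoint from `J₁` and contained in `int J₁`. Then
`int J₁ \ ⋃ i, closure (int (K i))` is path-connected. -/
theorem jordanInterior_diff_closures_pathConnected
    (J₁ : Set (EuclideanSpace ℝ (Fin 2))) (hJ₁ : IsJordanCurve J₁)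
    (m : ℕ) (K : Fin m → Set (EuclideanSpace ℝ (Fin 2)))
    (hK : ∀ i, IsJordanCurve (K i))
    (hdisj : Pairwise (Function.onFun Disjoint K))
    (hdisjJ₁ : ∀ i, Disjoint (K i) J₁)
    (hsub : ∀ i, K i ⊆ jordanInterior J₁) :
    IsPathConnected (jordanInterior J₁ \ ⋃ i, closure (jordanInterior (K i))) := by
  have h := JCT.main (JCT.isJ_image hJ₁) (K := fun i => JCT.e '' K i)
    (fun i => JCT.isJ_image (hK i))
    (fun i j hij => (disjoint_image_iff JCT.e.injective).2 (hdisj hij))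
    (fun i => (disjoint_image_iff JCT.e.injective).2 (hdisjJ₁ i))
    (fun i => by rw [← JCT.image_jordanInterior]; exact image_mono (hsub i))
  rw [← JCT.e.toHomeomorph.isPathConnected_image]
  convert h using 1
  change JCT.e '' _ = _
  rw [image_sdiff JCT.e.injective, JCT.image_jordanInterior, image_iUnion]
  congr 1
  refine iUnion_congr fun i => ?_
  rw [← JCT.image_jordanInterior]
  exact JCT.e.toHomeomorph.image_closure _
end

section
/- Let J_1, …, J_n be pairwise disjoint Jordan curves in ℝ². Then the complement ℝ² \ ⋃_{i=1}^n closure(int J_i) is path-connected. -/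
open Set

open Topology Filter

lemma isPreconnected_outer {E : Type*} [NormedAddCommGroup E] [NormedSpace ℝ E]
    (h : 1 < Module.rank ℝ E) {R : ℝ} (hR : 0 ≤ R) :
    IsPreconnected ((Metric.closedBall (0 : E) R)ᶜ) := by
  have h0 := (isConnected_compl_singleton_of_one_lt_rank h (0 : E)).isPreconnected
  have := h0.image (fun y => (1 + R / ‖y‖) • y) (by
    apply ContinuousOn.smul _ continuousOn_id
    apply continuousOn_const.add
    apply continuousOn_const.div continuous_norm.continuousOn
    intro x hx; simpa using hx)
  convert this using 1
  ext z
  simp only [mem_compl_iff, Metric.mem_closedBall, dist_zero_right, not_le, mem_image,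
    mem_singleton_iff]
  constructor
  · intro hz
    have hz0 : 0 < ‖z‖ := lt_of_le_of_lt hR hz
    have h1 : 0 < (‖z‖ - R) / ‖z‖ := div_pos (by linarith) hz0
    refine ⟨((‖z‖ - R) / ‖z‖) • z, ?_, ?_⟩
    · simp only [smul_eq_zero, not_or]
      exact ⟨h1.ne', norm_pos_iff.1 hz0⟩
    · rw [norm_smul, Real.norm_of_nonneg h1.le, smul_smul]
      have : (1 + R / ((‖z‖ - R) / ‖z‖ * ‖z‖)) * ((‖z‖ - R) / ‖z‖) = 1 := by
        have : ‖z‖ - R ≠ 0 := by linarith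
        field_simp
        ring
      rw [this, one_smul]
  · rintro ⟨y, hy, rfl⟩
    have hy0 : 0 < ‖y‖ := norm_pos_iff.2 hy
    rw [norm_smul, Real.norm_of_nonneg (by positivity)]
    field_simp
    linarith

lemma no_nonvanishing (F : ℂ → ℂ) (hF : Continuous F) (hne : ∀ z, F z ≠ 0) (x : ℂ) (R : ℝ)
    (hR : ∀ z, R ≤ ‖z‖ → F z = z - x) : False := by
  obtain ⟨G, ⟨-, hG⟩, -⟩ := Complex.isCoveringMap_exp.existsUnique_continuousMap_lifts
    (⟨fun z => ⟨F z, hne z⟩, by fun_prop⟩ : C(ℂ, {z : ℂ // z ≠ 0})) 0 (Complex.log (F 0))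
    (by simp [Complex.exp_log (hne 0)])
  have hG' : ∀ z, Complex.exp (G z) = F z := fun z => by
    simpa using congrArg Subtype.val (congrFun hG z)
  set r : ℝ := |R| + ‖x‖ + 1 with hr
  have hrpos : 0 < r := by positivity
  let c : ℝ → ℂ := fun t => x + r * Complex.exp (t * Complex.I)
  have hc : Continuous c := by fun_prop
  have hcn : ∀ t, R ≤ ‖c t‖ := by
    intro t
    have h1 : ‖(r : ℂ) * Complex.exp (t * Complex.I)‖ = r := by
      rw [norm_mul, Complex.norm_exp_ofReal_mul_I, Complex.norm_real, Real.norm_of_nonneg hrpos.le,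
        mul_one]
    have h2 := norm_sub_le (c t) x
    have h3 : c t - x = r * Complex.exp (t * Complex.I) := by simp [c]
    rw [h3, h1] at h2
    have := le_abs_self R
    linarith
  let u : ℝ → ℂ := fun t => G (c t) - t * Complex.I
  have hu : Continuous u := by fun_prop
  have hu' : ∀ t, Complex.exp (u t) = r := by
    intro t
    simp only [u]
    rw [Complex.exp_sub, hG', hR _ (hcn t), div_eq_iff (Complex.exp_ne_zero _)]
    simp [c]
  have := Complex.isCoveringMap_exp.eq_of_comp_eq hu (continuous_const (y := u 0))
    (by ext t; simp [hu']) 0 rfl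
  have h2 := congrFun this (2 * Real.pi)
  have h3 : c (2 * Real.pi) = c 0 := by simp [c]
  simp only [u, h3] at h2
  simp [Real.pi_ne_zero, Complex.ext_iff] at h2

/-- `(z-x)/(z-y)` has a continuous logarithm on `K`. -/
def HasLog (K : Set ℂ) (x y : ℂ) : Prop :=
  ∃ g : ℂ → ℂ, ContinuousOn g K ∧ ∀ z ∈ K, (z - y) * Complex.exp (g z) = z - x

lemma HasLog.trans {K : Set ℂ} {x y w : ℂ} (h1 : HasLog K x y) (h2 : HasLog K y w) :
    HasLog K x w := by
  obtain ⟨g, hg, hg'⟩ := h1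
  obtain ⟨k, hk, hk'⟩ := h2
  refine ⟨fun z => g z + k z, hg.add hk, fun z hz => ?_⟩
  rw [Complex.exp_add, ← hg' z hz, ← hk' z hz]
  ring

lemma HasLog.symm {K : Set ℂ} {x y : ℂ} (h1 : HasLog K x y) : HasLog K y x := by
  obtain ⟨g, hg, hg'⟩ := h1
  refine ⟨fun z => - g z, hg.neg, fun z hz => ?_⟩
  rw [← hg' z hz, mul_assoc, ← Complex.exp_add]
  simp

lemma hasLog_of_preconnected {K : Set ℂ} (hK : IsClosed K) (hc : IsPreconnected Kᶜ) {x y : ℂ}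
    (hx : x ∉ K) (hy : y ∉ K) : HasLog K x y := by
  refine hc.induction₂' (HasLog K) ?_ (fun _ _ _ _ _ _ => HasLog.trans) hx hy
  intro w hw
  obtain ⟨ε, hε, hb⟩ := Metric.isOpen_iff.1 hK.isOpen_compl w hw
  have : ∀ᶠ v in 𝓝 w, HasLog K w v := by
    have key : ∀ v ∈ Metric.ball w (ε), HasLog K v w := by
      intro v hv
      have hn : ∀ z ∈ K, z - w ≠ 0 ∧ (z - v) / (z - w) ∈ Complex.slitPlane := by
        intro z hz
        have hzw : ε ≤ ‖z - w‖ := by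
          by_contra hlt
          exact hb (by simpa [dist_eq_norm] using hlt) hz
        have h0 : z - w ≠ 0 := norm_pos_iff.1 (hε.trans_le hzw)
        refine ⟨h0, ?_⟩
        have : (z - v) / (z - w) = 1 + (w - v) / (z - w) := by
          field_simp; ring
        rw [this]
        apply Complex.mem_slitPlane_of_norm_lt_one
        rw [norm_div, div_lt_one (by positivity)]
        rw [Metric.mem_ball, dist_comm, dist_eq_norm] at hv
        linarith
      refine ⟨fun z => Complex.log ((z - v) / (z - w)), ?_, ?_⟩
      · apply ContinuousOn.clog
        · apply ContinuousOn.div (by fun_prop) (by fun_prop)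
          exact fun z hz => (hn z hz).1
        · exact fun z hz => (hn z hz).2
      · intro z hz
        rw [Complex.exp_log (Complex.slitPlane_ne_zero (hn z hz).2)]
        have := (hn z hz).1
        field_simp
    filter_upwards [Metric.ball_mem_nhds w hε] with v hv
    exact (key v hv).symm
  filter_upwards [mem_nhdsWithin_of_mem_nhds this] with v hv
  exact ⟨hv, hv.symm⟩

lemma mem_component_of_hasLog {K : Set ℂ} (hK : IsClosed K) {x y : ℂ}
    (hx : x ∉ K) (hy : y ∉ K) (hbd : Bornology.IsBounded (connectedComponentIn Kᶜ x))
    (h : HasLog K x y) : y ∈ connectedComponentIn Kᶜ x := by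
  by_contra hyU
  obtain ⟨g, hg, hg'⟩ := h
  obtain ⟨G, hG⟩ := ContinuousMap.exists_restrict_eq (Y := ℂ) hK ⟨fun z => g z, continuousOn_iff_continuous_domRestrict.1 hg⟩
  have hG' : ∀ z ∈ K, G z = g z := fun z hz =>
    congrArg (fun f => f ⟨z, hz⟩) hG
  set U := connectedComponentIn Kᶜ x with hU
  have hUo : IsOpen U := hK.isOpen_compl.connectedComponentIn
  have hfr : frontier U ⊆ K := by
    intro z hz
    by_contra hzK
    have hcl := isPreconnected_connectedComponentIn (F := Kᶜ) (x := x)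
    have h1 : IsPreconnected (insert z U) :=
      hcl.subset_closure (subset_insert _ _) (insert_subset hz.1 subset_closure)
    have h2 : insert z U ⊆ U := h1.subset_connectedComponentIn
      (mem_insert_of_mem _ (mem_connectedComponentIn hx))
      (insert_subset hzK (connectedComponentIn_subset _ _))
    have : z ∈ U := h2 (mem_insert _ _)
    rw [hUo.frontier_eq] at hz
    exact hz.2 this
  classical
  let F : ℂ → ℂ := U.piecewise (fun z => (z - y) * Complex.exp (G z)) (fun z => z - x)
  have hF : Continuous F := by
    apply Continuous.piecewise
    · intro a ha
      rw [hG' a (hfr ha), hg' a (hfr ha)]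
    · fun_prop
    · fun_prop
  obtain ⟨R, hR⟩ := hbd.subset_ball 0
  refine no_nonvanishing F hF ?_ x R ?_
  · intro z
    by_cases hz : z ∈ U
    · simp only [F, piecewise_eq_of_mem _ _ _ hz]
      refine mul_ne_zero ?_ (Complex.exp_ne_zero _)
      intro h0
      rw [sub_eq_zero] at h0
      exact hyU (h0 ▸ hz)
    · simp only [F, piecewise_eq_of_notMem _ _ _ hz]
      intro h0
      rw [sub_eq_zero] at h0
      exact hz (h0 ▸ mem_connectedComponentIn hx)
  · intro z hz
    have : z ∉ U := fun hzU => by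
      have := hR hzU
      simp at this
      linarith
    simp only [F, piecewise_eq_of_notMem _ _ _ this]

lemma hasLog_iUnion {ι : Type*} (K : ι → Set ℂ) (hK : ∀ i, IsClosed (K i))
    (hn : ∀ i j, Disjoint (K i) (K j) ∨ K i ⊆ K j ∨ K j ⊆ K i) {x y : ℂ}
    (h : ∀ i, HasLog (K i) x y) (s : Finset ι) : HasLog (⋃ i ∈ s, K i) x y := by
  classical
  induction s using Finset.induction_on with
  | empty => exact ⟨0, by simp, by simp⟩
  | insert a s ha ih =>
    obtain ⟨g, hg, hg'⟩ := ih
    by_cases hs : ∃ j ∈ s, K a ⊆ K j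
    · obtain ⟨j, hj, haj⟩ := hs
      have : (⋃ i ∈ insert a s, K i) = ⋃ i ∈ s, K i := by
        rw [Finset.set_biUnion_insert]
        exact union_eq_right.2 (haj.trans (subset_biUnion_of_mem (u := K) hj))
      rw [this]
      exact ⟨g, hg, hg'⟩
    push Not at hs
    obtain ⟨k, hk, hk'⟩ := h a
    set T := ⋃ i ∈ s.filter (fun i => Disjoint (K a) (K i)), K i with hT
    have hTs : T ⊆ ⋃ i ∈ s, K i := biUnion_subset_biUnion_left (by intro i hi; exact (Finset.mem_filter.1 hi).1)
    have hTc : IsClosed T := Set.Finite.isClosed_biUnion (Finset.finite_toSet _) (fun i _ => hK i)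
    have hTd : ∀ z ∈ T, z ∉ K a := by
      intro z hz hza
      simp only [hT, mem_iUnion, Finset.mem_filter] at hz
      obtain ⟨i, ⟨_, hi⟩, hzi⟩ := hz
      exact disjoint_left.1 hi hza hzi
    have hun : (⋃ i ∈ insert a s, K i) = K a ∪ T := by
      rw [Finset.set_biUnion_insert]
      apply Subset.antisymm
      · rintro z (hz | hz)
        · exact Or.inl hz
        · simp only [mem_iUnion] at hz
          obtain ⟨i, hi, hzi⟩ := hz
          rcases hn a i with h1 | h1 | h1
          · right
            simp only [hT, mem_iUnion, Finset.mem_filter]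
            exact ⟨i, ⟨hi, h1⟩, hzi⟩
          · exact absurd h1 (hs i hi)
          · exact Or.inl (h1 hzi)
      · exact union_subset_union_right _ hTs
    rw [hun]
    refine ⟨(K a).piecewise k g, ?_, ?_⟩
    · apply ContinuousOn.union_of_isClosed _ _ (hK a) hTc
      · exact hk.congr (fun z hz => piecewise_eq_of_mem _ _ _ hz)
      · exact (hg.mono hTs).congr (fun z hz => piecewise_eq_of_notMem _ _ _ (hTd z hz))
    · rintro z (hz | hz)
      · rw [piecewise_eq_of_mem _ _ _ hz]; exact hk' z hz
      · rw [piecewise_eq_of_notMem _ _ _ (hTd z hz)]; exact hg' z (hTs hz)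

lemma complex_rank : 1 < Module.rank ℝ ℂ := by
  rw [Complex.rank_real_complex]; norm_num

lemma compl_iUnion_connected {ι : Type*} [Fintype ι] (K : ι → Set ℂ) (hK : ∀ i, IsCompact (K i))
    (hn : ∀ i j, Disjoint (K i) (K j) ∨ K i ⊆ K j ∨ K j ⊆ K i)
    (hc : ∀ i, IsPreconnected (K i)ᶜ) : IsPathConnected (⋃ i, K i)ᶜ := by
  set L := ⋃ i, K i with hL
  have hLc : IsCompact L := isCompact_iUnion hK
  obtain ⟨R, hR⟩ := hLc.isBounded.subset_closedBall 0
  have hRL : (Metric.closedBall (0 : ℂ) (max R 0))ᶜ ⊆ Lᶜ := compl_subset_compl.2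
    (hR.trans (Metric.closedBall_subset_closedBall (le_max_left _ _)))
  have hO := isPreconnected_outer complex_rank (le_max_right R 0)
  have unb : ∀ x, ¬ Bornology.IsBounded (connectedComponentIn Lᶜ x) →
      ∃ z, z ∈ connectedComponentIn Lᶜ x ∧ z ∈ (Metric.closedBall (0 : ℂ) (max R 0))ᶜ := by
    intro x hx
    by_contra! hcon
    apply hx
    exact Metric.isBounded_closedBall.subset (fun z hz => not_not.1 (hcon z hz))
  have hlog : ∀ x y, x ∉ L → y ∉ L → HasLog L x y := by
    intro x y hx hy
    have := hasLog_iUnion K (fun i => (hK i).isClosed) hn (x := x) (y := y) (fun i =>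
      hasLog_of_preconnected (hK i).isClosed (hc i) (fun h => hx (mem_iUnion_of_mem i h))
        (fun h => hy (mem_iUnion_of_mem i h))) Finset.univ
    simpa using this
  have hall : ∀ x ∈ Lᶜ, ∀ y ∈ Lᶜ, ∃ t, t ⊆ Lᶜ ∧ x ∈ t ∧ y ∈ t ∧ IsPreconnected t := by
    intro x hx y hy
    by_cases hbx : Bornology.IsBounded (connectedComponentIn Lᶜ x)
    · exact ⟨_, connectedComponentIn_subset _ _, mem_connectedComponentIn hx,
        mem_component_of_hasLog hLc.isClosed hx hy hbx (hlog x y hx hy),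
        isPreconnected_connectedComponentIn⟩
    by_cases hby : Bornology.IsBounded (connectedComponentIn Lᶜ y)
    · exact ⟨_, connectedComponentIn_subset _ _,
        mem_component_of_hasLog hLc.isClosed hy hx hby (hlog y x hy hx),
        mem_connectedComponentIn hy, isPreconnected_connectedComponentIn⟩
    obtain ⟨z, hz, hz'⟩ := unb x hbx
    obtain ⟨w, hw, hw'⟩ := unb y hby
    have h1 := (isPreconnected_connectedComponentIn (F := Lᶜ) (x := x)).union z hz hz' hO
    have h2 := h1.union w (Or.inr hw') hw isPreconnected_connectedComponentIn
    exact ⟨_, union_subset (union_subset (connectedComponentIn_subset _ _) hRL)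
      (connectedComponentIn_subset _ _), Or.inl (Or.inl (mem_connectedComponentIn hx)),
      Or.inr (mem_connectedComponentIn hy), h2⟩
  have hconn : IsConnected Lᶜ := by
    refine ⟨?_, isPreconnected_of_forall_pair hall⟩
    refine ⟨((max R 0 + 1 : ℝ) : ℂ), hRL ?_⟩
    simp only [mem_compl_iff, Metric.mem_closedBall, dist_zero_right, Complex.norm_real, not_le]
    rw [Real.norm_of_nonneg (by positivity)]
    linarith
  exact (hLc.isClosed.isOpen_compl.isConnected_iff_isPathConnected).1 hconn

abbrev E2 := EuclideanSpace ℝ (Fin 2)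

lemma e2_rank : 1 < Module.rank ℝ E2 := by
  rw [← Module.finrank_eq_rank]
  simp

lemma no_inj_real (φ : E2 → ℝ) (hφ : ContinuousOn φ {0}ᶜ) (hi : InjOn φ {0}ᶜ) : False := by
  have key : ∀ a b : E2, a ≠ 0 → b ≠ 0 → φ a < φ b → False := by
    intro a b ha hb hab
    have h1 := (isConnected_compl_singleton_of_one_lt_rank e2_rank (0 : E2)).isPreconnected
    obtain ⟨c, hc, hcm⟩ := h1.intermediate_value (f := φ) ha hb hφ
      (show (φ a + φ b) / 2 ∈ Icc (φ a) (φ b) from ⟨by linarith, by linarith⟩)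
    have h2 := ((Set.toFinite ({0, c} : Set E2)).countable.isConnected_compl_of_one_lt_rank
      e2_rank).isPreconnected
    have hac : a ≠ c := by rintro rfl; linarith
    have hbc : b ≠ c := by rintro rfl; linarith
    have hsub : ({0, c} : Set E2)ᶜ ⊆ {0}ᶜ := by
      intro z hz; simp at hz ⊢; exact hz.1
    obtain ⟨d, hd, hdm⟩ := h2.intermediate_value (f := φ) (a := a) (b := b)
      (by simp [ha, hac]) (by simp [hb, hbc]) (hφ.mono hsub)
      (show φ c ∈ Icc (φ a) (φ b) from ⟨by linarith, by linarith⟩)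
    have : d = c := hi (hsub hd) hc hdm
    simp [this] at hd
  obtain ⟨a, ha⟩ := exists_ne (0 : E2)
  have h2a : (2 : ℝ) • a ≠ 0 := by simpa using ha
  have hne : φ a ≠ φ ((2 : ℝ) • a) := by
    intro h
    have := hi ha h2a h
    rw [two_smul] at this
    exact ha (by simpa using this)
  rcases lt_or_gt_of_ne hne with h | h
  · exact key _ _ ha h2a h
  · exact key _ _ h2a ha h

lemma jordan_compact {J : Set E2} (hJ : IsJordanCurve J) : IsCompact J := by
  obtain ⟨f, hf, hi, rfl⟩ := hJ
  exact isCompact_range hf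

lemma jordan_connected {J : Set E2} (hJ : IsJordanCurve J) : IsConnected J := by
  obtain ⟨f, hf, hi, rfl⟩ := hJ
  have : ConnectedSpace (Metric.sphere (0 : E2) 1) :=
    isConnected_iff_connectedSpace.1 (isConnected_sphere e2_rank 0 zero_le_one)
  exact isConnected_range hf

lemma jordan_interior {J : Set E2} (hJ : IsJordanCurve J) : interior J = ∅ := by
  obtain ⟨f, hf, hi, rfl⟩ := hJ
  by_contra hne
  obtain ⟨p, hp⟩ := nonempty_iff_ne_empty.2 hne
  obtain ⟨r, hr, hb⟩ := Metric.isOpen_iff.1 isOpen_interior p hp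
  have hb' : Metric.ball p r ⊆ range f := hb.trans interior_subset
  have hemb := (hf.isClosedEmbedding hi).isEmbedding
  let b := OpenPartialHomeomorph.univBall p r
  have hbs : b.source = univ := OpenPartialHomeomorph.univBall_source p r
  have hbt : b.target = Metric.ball p r := OpenPartialHomeomorph.univBall_target p hr
  have hbm : ∀ z, b z ∈ range f := fun z => hb' (hbt ▸ b.map_source (hbs ▸ mem_univ z))
  have hbc : Continuous b := by
    rw [← continuousOn_univ, ← hbs]; exact b.continuousOn
  have hbi : Function.Injective b := by
    rw [← injOn_univ, ← hbs]; exact b.injOn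
  choose g hg using hbm
  have hgc : Continuous g := by
    rw [hemb.continuous_iff]
    convert hbc using 1
    exact funext hg
  have hgi : Function.Injective g := by
    intro z w h
    apply hbi
    rw [← hg, ← hg, h]
  haveI : Fact (Module.finrank ℝ E2 = 1 + 1) := ⟨by simp⟩
  let s := stereographic' (E := E2) 1 (g 0)
  have hmem : ∀ z ∈ ({0}ᶜ : Set E2), g z ∈ s.source := by
    intro z hz
    simp only [s, stereographic'_source, mem_compl_iff, mem_singleton_iff]
    exact fun h => hz (hgi h)
  refine no_inj_real (fun z => s (g z) 0) ?_ ?_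
  · have h1 : ContinuousOn (fun z => s (g z)) {0}ᶜ :=
      s.continuousOn.comp hgc.continuousOn hmem
    exact (by fun_prop : Continuous (fun v : EuclideanSpace ℝ (Fin 1) => v 0)).comp_continuousOn h1
  · intro z hz w hw h
    apply hgi
    apply s.injOn (hmem z hz) (hmem w hw)
    ext i
    rw [Subsingleton.elim i 0]
    exact h

def jordanExterior (J : Set E2) : Set E2 :=
  {x | x ∉ J ∧ ¬ Bornology.IsBounded (connectedComponentIn Jᶜ x)}

lemma same_comp {J S : Set E2} (hS : IsPreconnected S) (hSJ : S ⊆ Jᶜ) {x y : E2} (hx : x ∈ S)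
    (hy : y ∈ S) : connectedComponentIn Jᶜ x = connectedComponentIn Jᶜ y :=
  connectedComponentIn_eq (hS.subset_connectedComponentIn hx hSJ hy)

lemma subset_int {J S : Set E2} (hS : IsPreconnected S) (hSJ : S ⊆ Jᶜ) {x : E2} (hx : x ∈ S)
    (hxi : x ∈ jordanInterior J) : S ⊆ jordanInterior J :=
  fun y hy => ⟨hSJ hy, same_comp hS hSJ hx hy ▸ hxi.2⟩

lemma subset_ext {J S : Set E2} (hS : IsPreconnected S) (hSJ : S ⊆ Jᶜ) {x : E2} (hx : x ∈ S)
    (hxi : x ∈ jordanExterior J) : S ⊆ jordanExterior J :=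
  fun y hy => ⟨hSJ hy, same_comp hS hSJ hx hy ▸ hxi.2⟩

lemma trichotomy (J : Set E2) (x : E2) : x ∈ J ∨ x ∈ jordanInterior J ∨ x ∈ jordanExterior J := by
  unfold jordanInterior jordanExterior
  simp only [mem_setOf_eq]
  tauto

lemma not_int_ext {J : Set E2} {x : E2} (h : x ∈ jordanInterior J) (h' : x ∈ jordanExterior J) :
    False := h'.2 h.2

lemma outer_subset_ext {J : Set E2} {R : ℝ} (hR0 : 0 ≤ R) (hR : J ⊆ Metric.closedBall 0 R) :
    (Metric.closedBall (0 : E2) R)ᶜ ⊆ jordanExterior J := by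
  intro p hp
  have hs : (Metric.closedBall (0 : E2) R)ᶜ ⊆ Jᶜ := compl_subset_compl.2 hR
  refine ⟨hs hp, fun hb => ?_⟩
  have h1 := hb.subset ((isPreconnected_outer e2_rank hR0).subset_connectedComponentIn hp hs)
  have h2 : Bornology.IsBounded (univ : Set E2) := by
    rw [← union_compl_self (Metric.closedBall (0 : E2) R)]
    exact Metric.isBounded_closedBall.union h1
  exact NormedSpace.unbounded_univ ℝ E2 h2

lemma outer_nonempty (R : ℝ) : ((Metric.closedBall (0 : E2) R)ᶜ).Nonempty := by
  by_contra h
  rw [not_nonempty_iff_eq_empty, compl_empty_iff] at h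
  exact NormedSpace.unbounded_univ ℝ E2 (h ▸ Metric.isBounded_closedBall)

lemma ext_preconnected {J : Set E2} (hJ : IsCompact J) : IsPreconnected (jordanExterior J) := by
  obtain ⟨R, hR⟩ := hJ.isBounded.subset_closedBall 0
  have hR' : J ⊆ Metric.closedBall 0 (max R 0) :=
    hR.trans (Metric.closedBall_subset_closedBall (le_max_left _ _))
  have hO := isPreconnected_outer e2_rank (le_max_right R 0)
  have hOe := outer_subset_ext (le_max_right R 0) hR'
  obtain ⟨p, hp⟩ := outer_nonempty (max R 0)
  have : jordanExterior J = connectedComponentIn Jᶜ p := by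
    apply Subset.antisymm
    · intro x hx
      have : ∃ z, z ∈ connectedComponentIn Jᶜ x ∧ z ∈ (Metric.closedBall (0 : E2) (max R 0))ᶜ := by
        by_contra! hcon
        exact hx.2 (Metric.isBounded_closedBall.subset (fun z hz => not_not.1 (hcon z hz)))
      obtain ⟨z, hz, hz'⟩ := this
      have h1 := connectedComponentIn_eq hz
      have h2 := same_comp hO (compl_subset_compl.2 hR') hz' hp
      rw [← h2, ← h1]
      exact mem_connectedComponentIn hx.1
    · exact subset_ext isPreconnected_connectedComponentIn (connectedComponentIn_subset _ _)
        (mem_connectedComponentIn (hOe hp).1) (hOe hp)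
  rw [this]
  exact isPreconnected_connectedComponentIn

lemma comp_union {J : Set E2} (hJ : IsCompact J) (hc : IsConnected J) {x : E2} (hx : x ∉ J) :
    IsPreconnected (connectedComponentIn Jᶜ x ∪ J) := by
  set V := connectedComponentIn Jᶜ x with hV
  have hVp : IsPreconnected V := isPreconnected_connectedComponentIn
  have hxV : x ∈ V := mem_connectedComponentIn hx
  have hVo : IsOpen V := hJ.isClosed.isOpen_compl.connectedComponentIn
  have : ∃ q ∈ J, q ∈ closure V := by
    by_contra! hcon
    have h1 : closure V ⊆ V := hVp.closure.subset_connectedComponentIn (subset_closure hxV)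
      (fun z hz hzJ => hcon z hzJ hz)
    have h2 : IsClopen V := ⟨closure_subset_iff_isClosed.1 h1, hVo⟩
    have h3 := h2.eq_univ ⟨x, hxV⟩
    obtain ⟨q, hq⟩ := hc.nonempty
    exact connectedComponentIn_subset _ _ (show q ∈ V from h3 ▸ mem_univ q) hq
  obtain ⟨q, hq, hqV⟩ := this
  have h1 : IsPreconnected (insert q V) :=
    hVp.subset_closure (subset_insert _ _) (insert_subset hqV subset_closure)
  have h2 := h1.union q (mem_insert _ _) hq hc.isPreconnected
  rwa [insert_union, ← union_insert, insert_eq_of_mem hq] at h2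

lemma ext_open {J : Set E2} (hJ : IsCompact J) : IsOpen (jordanExterior J) := by
  rw [isOpen_iff_mem_nhds]
  intro x hx
  filter_upwards [(hJ.isClosed.isOpen_compl.connectedComponentIn (x := x)).mem_nhds
    (mem_connectedComponentIn hx.1)] with y hy
  exact subset_ext isPreconnected_connectedComponentIn (connectedComponentIn_subset _ _)
    (mem_connectedComponentIn hx.1) hx hy

lemma closure_int_subset {J : Set E2} (hJ : IsCompact J) :
    closure (jordanInterior J) ⊆ (jordanExterior J)ᶜ :=
  closure_minimal (fun _ h h' => not_int_ext h h') (ext_open hJ).isClosed_compl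

lemma closure_int_compact {J : Set E2} (hJ : IsCompact J) :
    IsCompact (closure (jordanInterior J)) := by
  apply Metric.isCompact_of_isClosed_isBounded isClosed_closure
  obtain ⟨R, hR⟩ := hJ.isBounded.subset_closedBall 0
  have hR' : J ⊆ Metric.closedBall 0 (max R 0) :=
    hR.trans (Metric.closedBall_subset_closedBall (le_max_left _ _))
  refine (Metric.isBounded_closedBall (x := (0 : E2)) (r := max R 0)).subset
    ((closure_int_subset hJ).trans ?_)
  rw [compl_subset_comm]
  exact outer_subset_ext (le_max_right R 0) hR'

lemma compl_closure_int_preconnected {J : Set E2} (hJ : IsJordanCurve J) :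
    IsPreconnected (closure (jordanInterior J))ᶜ := by
  have hc := jordan_compact hJ
  refine (ext_preconnected hc).subset_closure
    (subset_compl_comm.1 (closure_int_subset hc)) ?_
  intro x hx
  rw [mem_closure_iff]
  intro o ho hxo
  by_contra hne
  have hsub : o ∩ (closure (jordanInterior J))ᶜ ⊆ J := by
    rintro y ⟨hy, hyK⟩
    rcases trichotomy J y with h | h | h
    · exact h
    · exact absurd (subset_closure h) hyK
    · exact absurd ⟨y, hy, h⟩ hne
  have := interior_maximal hsub (ho.inter isClosed_closure.isOpen_compl) ⟨hxo, hx⟩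
  rw [jordan_interior hJ] at this
  exact this

lemma nested_of {J J' : Set E2} (hJ : IsCompact J) (hc : IsConnected J) (hJ' : IsCompact J')
    (hd : Disjoint J J') (h : J' ⊆ jordanInterior J) : jordanInterior J' ⊆ jordanInterior J := by
  obtain ⟨R, hR⟩ := (hJ.isBounded.union hJ'.isBounded).subset_closedBall 0
  have hR' : J ∪ J' ⊆ Metric.closedBall 0 (max R 0) :=
    hR.trans (Metric.closedBall_subset_closedBall (le_max_left _ _))
  obtain ⟨p, hp⟩ := outer_nonempty (max R 0)
  have hp1 := outer_subset_ext (le_max_right R 0) (subset_union_left.trans hR') hp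
  have hp2 := outer_subset_ext (le_max_right R 0) (subset_union_right.trans hR') hp
  have key : ∀ z, z ∈ J ∪ jordanExterior J → z ∈ jordanExterior J' := by
    have hsub : connectedComponentIn Jᶜ p ⊆ jordanExterior J :=
      subset_ext isPreconnected_connectedComponentIn (connectedComponentIn_subset _ _)
        (mem_connectedComponentIn hp1.1) hp1
    have hext : jordanExterior J ⊆ connectedComponentIn Jᶜ p :=
      (ext_preconnected hJ).subset_connectedComponentIn hp1 (fun z hz => hz.1)
    have h1 := comp_union hJ hc hp1.1
    have h2 := subset_ext (J := J') h1 (by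
      rintro z (hz | hz) hz'
      · exact not_int_ext (h hz') (hsub hz)
      · exact disjoint_left.1 hd hz hz') (Or.inl (mem_connectedComponentIn hp1.1)) hp2
    rintro z (hz | hz)
    · exact h2 (Or.inr hz)
    · exact h2 (Or.inl (hext hz))
  intro z hz
  rcases trichotomy J z with h1 | h1 | h1
  · exact (not_int_ext hz (key z (Or.inl h1))).elim
  · exact h1
  · exact (not_int_ext hz (key z (Or.inr h1))).elim

lemma int_or_ext {J J' : Set E2} (hc' : IsConnected J') (hd : Disjoint J J') :
    J' ⊆ jordanInterior J ∨ J' ⊆ jordanExterior J := by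
  obtain ⟨q, hq⟩ := hc'.nonempty
  have hs : J' ⊆ Jᶜ := hd.subset_compl_left
  rcases trichotomy J q with h | h | h
  · exact absurd h (hs hq)
  · exact Or.inl (subset_int hc'.isPreconnected hs hq h)
  · exact Or.inr (subset_ext hc'.isPreconnected hs hq h)

lemma nested_or_disjoint {J J' : Set E2} (hJ : IsJordanCurve J) (hJ' : IsJordanCurve J')
    (hd : Disjoint J J') :
    Disjoint (closure (jordanInterior J)) (closure (jordanInterior J')) ∨
    closure (jordanInterior J) ⊆ closure (jordanInterior J') ∨
    closure (jordanInterior J') ⊆ closure (jordanInterior J) := by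
  have k := jordan_compact hJ
  have k' := jordan_compact hJ'
  have c := jordan_connected hJ
  have c' := jordan_connected hJ'
  rcases int_or_ext c' hd with h1 | h1
  · exact Or.inr (Or.inr (closure_mono (nested_of k c k' hd h1)))
  rcases int_or_ext c hd.symm with h2 | h2
  · exact Or.inr (Or.inl (closure_mono (nested_of k' c' k hd.symm h2)))
  left
  rw [disjoint_left]
  intro z hz hz'
  apply closure_int_subset k' hz'
  rcases trichotomy J z with h | h | h
  · exact h2 h
  · have h3 := comp_union k c h.1
    obtain ⟨q, hq⟩ := c.nonempty
    refine subset_ext h3 ?_ (Or.inr hq) (h2 hq) (Or.inl (mem_connectedComponentIn h.1))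
    rintro w (hw | hw) hw'
    · have := subset_int isPreconnected_connectedComponentIn (connectedComponentIn_subset _ _)
        (mem_connectedComponentIn h.1) h hw
      exact not_int_ext this (h1 hw')
    · exact (h2 hw).1 hw'
  · exact absurd h (closure_int_subset k hz)

/-- For any finite collection of pairwise disjoint Jordan curves `J 0, …, J (n-1)` in `ℝ²`,
the complement `ℝ² \ ⋃ i, closure (int (J i))` is path-connected. -/
theorem compl_iUnion_closures_pathConnected
    (n : ℕ) (J : Fin n → Set (EuclideanSpace ℝ (Fin 2)))
    (hJ : ∀ i, IsJordanCurve (J i))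
    (hdisj : Pairwise (Function.onFun Disjoint J)) :
    IsPathConnected ((⋃ i, closure (jordanInterior (J i)))ᶜ) := by
  let e : E2 ≃ₜ ℂ := Complex.orthonormalBasisOneI.repr.symm.toHomeomorph
  have := compl_iUnion_connected (fun i => e '' closure (jordanInterior (J i)))
    (fun i => (closure_int_compact (jordan_compact (hJ i))).image e.continuous) ?_ ?_
  · rw [← image_iUnion, ← e.image_compl] at this
    exact e.isPathConnected_image.1 this
  · intro i j
    by_cases hij : i = j
    · subst hij; exact Or.inr (Or.inl Subset.rfl)
    · simp only [disjoint_image_iff e.injective, image_subset_image_iff e.injective]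
      exact nested_or_disjoint (hJ i) (hJ j) (hdisj hij)
  · intro i
    rw [← e.image_compl]
    exact e.isPreconnected_image.2 (compl_closure_int_preconnected (hJ i))
end
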